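/- arXiv:2510.12046 — 4 statements merged into one kernel-verified Lean document; each statement's English description precedes it below -/
import Mathlib

section
/- For every integer n ≥ 1, the set of separable permutations in S_n equals the set of absolute values of separable signed permutations in B_n; that is, K(S_n) = { |w| : w ∈ K(B_n) }, where |w| denotes the permutation |w_1||w_2|⋯|w_n|. -/
/-!
A permutation `u ∈ K(S_n)`, read as a signed permutation with positive entries, lies in `K(B_n)`:
on positive words `sts` and `st` agree, and no other forbidden signed pattern can occur.

Conversely, avoiding `(-2)1` and `2(-1)` means that two entries `x … y` of `w` with `|y| < |x|`
(an inversion of `|w|`) have the same sign (`same_sign_of_inversion`). In an occurrence of `3142` or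
`2413` in `|w|` the inversions connect all four entries, so these have a common sign, and `w` itself
contains the same pattern or its negative (`contains_of_allSameSign`), both of which are forbidden.
-/

namespace SepPaperFormal

noncomputable section

open Polynomial

def st (a : List ℤ) : List ℤ :=
  a.map (fun x => ((a.filter (fun y => decide (y < x))).length : ℤ) + 1)

def sts (a : List ℤ) : List ℤ :=
  a.map (fun x => x.sign * (((a.filter (fun y => decide (|y| < |x|))).length : ℤ) + 1))

def IsSignedPerm (w : List ℤ) : Prop :=
  (w.map Int.natAbs).Perm (List.range' 1 w.length)

def ContainsB (w u : List ℤ) : Prop := ∃ s : List ℤ, s.Sublist w ∧ sts s = u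

def ContainsA (w u : List ℤ) : Prop := ∃ s : List ℤ, s.Sublist w ∧ st s = u

def IsSepB (w : List ℤ) : Prop :=
  IsSignedPerm w ∧
    ¬ ContainsB w [-2, 1] ∧ ¬ ContainsB w [2, -1] ∧
    ¬ ContainsB w [3, 1, 4, 2] ∧ ¬ ContainsB w [2, 4, 1, 3] ∧
    ¬ ContainsB w [-3, -1, -4, -2] ∧ ¬ ContainsB w [-2, -4, -1, -3]

def IsSepA (w : List ℤ) : Prop :=
  IsSignedPerm w ∧ (∀ x ∈ w, 0 < x) ∧
    ¬ ContainsA w [3, 1, 4, 2] ∧ ¬ ContainsA w [2, 4, 1, 3]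

def oplus (u v : List ℤ) : List ℤ :=
  u ++ v.map (fun x => x + x.sign * (u.length : ℤ))

def ominus (u v : List ℤ) : List ℤ :=
  u.map (fun x => x + x.sign * (v.length : ℤ)) ++ v

def AllSameSign (l : List ℤ) : Prop := (∀ x ∈ l, 0 < x) ∨ (∀ x ∈ l, x < 0)

def OppSign (a b : List ℤ) : Prop := ∀ x ∈ a, ∀ y ∈ b, x * y < 0

-- blocks for statement 3
def blockOf (w : List ℤ) (q : List ℕ) (i : ℕ) : List ℤ :=
  (w.drop q[i]!).take (q[i+1]! - q[i]!)

def cutSeq (w : List ℤ) (cuts : List ℕ) : List ℕ := 0 :: (cuts ++ [w.length])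

def GoodDecomp (w : List ℤ) (cuts : List ℕ) : Prop :=
  List.Chain' (· < ·) (cutSeq w cuts) ∧
  w = List.foldl oplus (blockOf w (cutSeq w cuts) 0)
        ((List.range cuts.length).map (fun i => sts (blockOf w (cutSeq w cuts) (i + 1)))) ∧
  IsSepB (blockOf w (cutSeq w cuts) 0) ∧
  (∀ i, 1 ≤ i → i ≤ cuts.length → IsSepB (sts (blockOf w (cutSeq w cuts) i))) ∧
  (∀ j, j ≤ cuts.length → AllSameSign (blockOf w (cutSeq w cuts) j)) ∧
  (∀ i, 1 ≤ i → i ≤ cuts.length →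
    OppSign (blockOf w (cutSeq w cuts) (i - 1)) (blockOf w (cutSeq w cuts) i))

-- statement 4
inductive InC : List ℤ → Prop
  | one : InC [1]
  | negone : InC [-1]
  | dsum (u v : List ℤ) : InC u → InC v → InC (oplus u v)
  | ssum (u v : List ℤ) : InC u → InC v → AllSameSign (u ++ v) → InC (ominus u v)

-- the map φₙ as a relation
inductive PhiRel : List ℤ → List ℤ → Prop
  | base : PhiRel [1] []
  | gasc (w u : List ℤ) (p : ℕ) (hp1 : 1 ≤ p) (hp2 : p < w.length)
      (h : ∀ i j, i < p → p ≤ j → j < w.length → w[i]! < w[j]!)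
      (ih : PhiRel (w.take p) u) :
      PhiRel w (oplus u (st (w.drop p)))
  | gdes (w u : List ℤ) (p : ℕ) (hp1 : 1 ≤ p) (hp2 : p < w.length)
      (h : ∀ i j, i < p → p ≤ j → j < w.length → w[j]! < w[i]!)
      (ih : PhiRel (st (w.take p)) u) :
      PhiRel w (oplus u ((w.drop p).map (fun x => x - ((w.length - p : ℕ) : ℤ) - 1)))

-- the map ψₙ as a relation
inductive PsiRel : List ℤ → List ℤ → Prop
  | base : PsiRel [] [1]
  | pos (w u : List ℤ) (p : ℕ) (hp : p < w.length)
      (hdec : w = oplus (w.take p) (sts (w.drop p)))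
      (hsign : AllSameSign (w.drop p))
      (hlast : 0 < w[w.length - 1]!)
      (ih : PsiRel (w.take p) u) :
      PsiRel w (oplus u (sts (w.drop p)))
  | neg (w u : List ℤ) (p : ℕ) (hp : p < w.length)
      (hdec : w = oplus (w.take p) (sts (w.drop p)))
      (hsign : AllSameSign (w.drop p))
      (hlast : w[w.length - 1]! < 0)
      (ih : PsiRel (w.take p) u) :
      PsiRel w (ominus u ((sts (w.drop p)).map (fun x => x + ((w.length - p : ℕ) : ℤ) + 1)))

-- descent statistics
def DesB (w : List ℤ) : Finset ℕ :=
  (Finset.range w.length).filter (fun i => (if i = 0 then (0 : ℤ) else w[i-1]!) > w[i]!)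

def DDesB (w : List ℤ) : Finset ℕ :=
  (Finset.range w.length).filter (fun i =>
    (i = 0 ∨ (if i - 1 = 0 then (0 : ℤ) else w[i-2]!) > (if i = 0 then (0 : ℤ) else w[i-1]!)) ∧
    (if i = 0 then (0 : ℤ) else w[i-1]!) > w[i]!)

def DesA (w : List ℤ) : Finset ℕ :=
  (Finset.range w.length).filter (fun i => 1 ≤ i ∧ w[i-1]! > w[i]!)

def DDesA (w : List ℤ) : Finset ℕ :=
  (Finset.range w.length).filter (fun i => 1 ≤ i ∧
    (i = 1 ∨ w[i-2]! > w[i-1]!) ∧ w[i-1]! > w[i]!)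

-- inversions, negatives, negative sum pairs (0-based index sets)
def InvF (w : List ℤ) : Finset (ℕ × ℕ) :=
  (Finset.range w.length ×ˢ Finset.range w.length).filter
    (fun p => p.1 < p.2 ∧ w[p.2]! < w[p.1]!)

def NegF (w : List ℤ) : Finset ℕ :=
  (Finset.range w.length).filter (fun i => w[i]! < 0)

def NspF (w : List ℤ) : Finset (ℕ × ℕ) :=
  (Finset.range w.length ×ˢ Finset.range w.length).filter
    (fun p => p.1 < p.2 ∧ w[p.1]! + w[p.2]! < 0)

/-- Left weak order on `S_n` (combinatorial characterization). -/
def leS (u v : List ℤ) : Prop := InvF u ⊆ InvF v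

/-- Left weak order on `B_n` (combinatorial characterization). -/
def leB (u v : List ℤ) : Prop := InvF u ⊆ InvF v ∧ NegF u ⊆ NegF v ∧ NspF u ⊆ NspF v

/-- Coxeter length in type `B`. -/
def lenB (w : List ℤ) : ℕ := (NegF w).card + (InvF w).card + (NspF w).card

/-- Coxeter length in type `A`. -/
def lenS (w : List ℤ) : ℕ := (InvF w).card

def IsPermW (w : List ℤ) : Prop := IsSignedPerm w ∧ ∀ x ∈ w, 0 < x

/-- Rank generating function of the principal lower ideal `Λ_w^B`. -/
def FLamB (w : List ℤ) : Polynomial ℚ :=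
  ∑ᶠ u ∈ {u : List ℤ | u.length = w.length ∧ IsSignedPerm u ∧ leB u w},
    (X : Polynomial ℚ) ^ lenB u

/-- Rank generating function of the principal upper ideal `V_w^B`. -/
def FVB (w : List ℤ) : Polynomial ℚ :=
  ∑ᶠ u ∈ {u : List ℤ | u.length = w.length ∧ IsSignedPerm u ∧ leB w u},
    (X : Polynomial ℚ) ^ lenB u

/-- Rank generating function of the principal lower ideal `Λ_w^S`. -/
def FLamS (w : List ℤ) : Polynomial ℚ :=
  ∑ᶠ u ∈ {u : List ℤ | u.length = w.length ∧ IsPermW u ∧ leS u w},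
    (X : Polynomial ℚ) ^ lenS u

/-- Rank generating function of the principal upper ideal `V_w^S`. -/
def FVS (w : List ℤ) : Polynomial ℚ :=
  ∑ᶠ u ∈ {u : List ℤ | u.length = w.length ∧ IsPermW u ∧ leS w u},
    (X : Polynomial ℚ) ^ lenS u

/-- `[i] = 1 + q + ⋯ + q^{i-1}`. -/
def qint (i : ℕ) : Polynomial ℚ := ∑ j ∈ Finset.range i, (X : Polynomial ℚ) ^ j

/-- `[m]! = [1][2]⋯[m]`. -/
def qfact (m : ℕ) : Polynomial ℚ := ∏ i ∈ Finset.range m, qint (i + 1)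

-- separating trees
inductive STree where
  | leaf : STree
  | node : Bool → STree → STree → STree

def numLeaves : STree → ℕ
  | .leaf => 1
  | .node _ l r => numLeaves l + numLeaves r

def Decomp (w : List ℤ) (p : ℕ) : Prop :=
  (w = oplus (w.take p) (sts (w.drop p)) ∧ IsSepB (w.take p) ∧ IsSepB (sts (w.drop p)) ∧
    AllSameSign (w.drop p)) ∨
  (w = ominus (sts (w.take p)) (w.drop p) ∧ IsSepB (sts (w.take p)) ∧ IsSepB (w.drop p) ∧
    AllSameSign (w.drop p))

/-- `IsSepTree w T`: `T` is the (shape of the) separating tree of the separable signed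
permutation `w`, where internal nodes labeled `true` are `⊕`-nodes and those labeled
`false` are `⊖`-nodes, and the separating index is chosen largest possible. -/
inductive IsSepTree : List ℤ → STree → Prop
  | leaf (x : ℤ) : IsSepTree [x] .leaf
  | nodeA (w : List ℤ) (p : ℕ) (l r : STree)
      (hp1 : 1 ≤ p) (hp2 : p < w.length)
      (hmax : ∀ q, p < q → q < w.length → ¬ Decomp w q)
      (hdec : w = oplus (w.take p) (sts (w.drop p)))
      (h1 : IsSepB (w.take p)) (h2 : IsSepB (sts (w.drop p)))
      (hsgn : AllSameSign (w.drop p))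
      (hl : IsSepTree (w.take p) l) (hr : IsSepTree (sts (w.drop p)) r) :
      IsSepTree w (.node (decide (w[p-1]! < w[p]!)) l r)
  | nodeB (w : List ℤ) (p : ℕ) (l r : STree)
      (hp1 : 1 ≤ p) (hp2 : p < w.length)
      (hmax : ∀ q, p < q → q < w.length → ¬ Decomp w q)
      (hdec : w = ominus (sts (w.take p)) (w.drop p))
      (h1 : IsSepB (sts (w.take p))) (h2 : IsSepB (w.drop p))
      (hsgn : AllSameSign (w.drop p))
      (hl : IsSepTree (sts (w.take p)) l) (hr : IsSepTree (w.drop p) r) :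
      IsSepTree w (.node (decide (w[p-1]! < w[p]!)) l r)

/-- Multiset of leaf-counts `N(V)` over internal `⊕`-nodes `V` whose parent is a
`⊖`-node (the root, whose parent label is `none`, is excluded): the set `S⁺(w)`. -/
def plusNodes : STree → Option Bool → Multiset ℕ
  | .leaf, _ => 0
  | .node b l r, parent =>
      (if b = true ∧ parent = some false then ({numLeaves (.node b l r)} : Multiset ℕ) else 0)
        + plusNodes l (some b) + plusNodes r (some b)

/-- Multiset of leaf-counts `N(V)` over internal `⊖`-nodes `V` whose parent is a
`⊕`-node (root excluded): the set `S⁻(w)`. -/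
def minusNodes : STree → Option Bool → Multiset ℕ
  | .leaf, _ => 0
  | .node b l r, parent =>
      (if b = false ∧ parent = some true then ({numLeaves (.node b l r)} : Multiset ℕ) else 0)
        + minusNodes l (some b) + minusNodes r (some b)

/-- `∏_{m ∈ s} [m]!`. -/
def qfactProd (s : Multiset ℕ) : Polynomial ℚ := (s.map qfact).prod


/-- Ranks computed by `st` determine the order of the entries. -/
theorem lt_of_rank_lt {l : List ℤ} {x y : ℤ}
    (h : ((l.filter (fun z => decide (z < x))).length : ℤ) + 1 <
      ((l.filter (fun z => decide (z < y))).length : ℤ) + 1) : x < y := by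
  by_contra! hyx
  have hsub : (l.filter (fun z => decide (z < y))).Sublist
      (l.filter (fun z => decide (z < x))) :=
    List.monotone_filter_right l (fun z hz => by
      simp only [decide_eq_true_eq] at hz ⊢
      omega)
  have := hsub.length_le
  omega

/-- The entries of `sts t` are the ranks of the absolute values of `t`, with the signs of `t`. -/
theorem sts_eq_sign_mul_rank (t : List ℤ) :
    sts t = t.map (fun x => x.sign *
      ((((t.map (fun x => |x|)).filter (fun y => decide (y < |x|))).length : ℤ) + 1)) := by
  simp [sts, List.filter_map, Function.comp_def]

theorem sts_of_pos {t : List ℤ} (ht : ∀ x ∈ t, 0 < x) :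
    sts t = st (t.map (fun x => |x|)) := by
  rw [sts_eq_sign_mul_rank, st, List.map_map]
  refine List.map_congr_left fun x hx => ?_
  simp [Int.sign_eq_one_of_pos (ht x hx)]

theorem sts_of_neg {t : List ℤ} (ht : ∀ x ∈ t, x < 0) :
    sts t = (st (t.map (fun x => |x|))).map (fun x => -x) := by
  rw [sts_eq_sign_mul_rank, st, List.map_map, List.map_map]
  refine List.map_congr_left fun x hx => ?_
  simp [Int.sign_eq_neg_one_of_neg (ht x hx)]

theorem map_abs_of_pos {t : List ℤ} (ht : ∀ x ∈ t, 0 < x) : t.map (fun x => |x|) = t := by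
  conv_rhs => rw [← List.map_id t]
  exact List.map_congr_left fun x hx => abs_of_pos (ht x hx)

theorem IsSignedPerm.ne_zero {w : List ℤ} (h : IsSignedPerm w) {x : ℤ} (hx : x ∈ w) : x ≠ 0 := by
  have hmem : x.natAbs ∈ List.range' 1 w.length :=
    (List.Perm.mem_iff h).1 (List.mem_map_of_mem hx)
  rw [List.mem_range'_1] at hmem
  omega

theorem isSignedPerm_map_abs {w : List ℤ} :
    IsSignedPerm (w.map (fun x => |x|)) ↔ IsSignedPerm w := by
  simp [IsSignedPerm, Function.comp_def, Int.natAbs_abs]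

/-- In a positive word only positive patterns occur, and they are ordinary patterns. -/
theorem containsA_of_containsB {w u : List ℤ} (hw : ∀ x ∈ w, 0 < x) (h : ContainsB w u) :
    ContainsA w u ∧ ∀ y ∈ u, 0 < y := by
  obtain ⟨s, hs, rfl⟩ := h
  have hpos : ∀ x ∈ s, 0 < x := fun x hx => hw x (hs.subset hx)
  have hst : sts s = st s := by rw [sts_of_pos hpos, map_abs_of_pos hpos]
  refine ⟨⟨s, hs, hst.symm⟩, ?_⟩
  rw [hst]
  intro y hy
  obtain ⟨x, -, rfl⟩ := List.mem_map.1 hy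
  positivity

/-- Avoidance of `(-2)1` and `2(-1)`: entries forming an inversion of `|w|` have equal signs. -/
theorem same_sign_of_inversion {w : List ℤ} (h₁ : ¬ ContainsB w [-2, 1])
    (h₂ : ¬ ContainsB w [2, -1]) {x y : ℤ} (hsub : [x, y].Sublist w) (hlt : |y| < |x|)
    (hy : y ≠ 0) : (0 < x ↔ 0 < y) := by
  have hx : x ≠ 0 := by
    rintro rfl
    exact absurd hlt (by simp)
  rcases lt_or_gt_of_ne hx with hx | hx <;> rcases lt_or_gt_of_ne hy with hy | hy
  · omega
  · exact absurd ⟨_, hsub, by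
      simp [sts, hlt, hlt.le, Int.sign_eq_neg_one_of_neg hx, Int.sign_eq_one_of_pos hy]⟩ h₁
  · exact absurd ⟨_, hsub, by
      simp [sts, hlt, hlt.le, Int.sign_eq_one_of_pos hx, Int.sign_eq_neg_one_of_neg hy]⟩ h₂
  · omega

theorem contains_of_allSameSign {w t : List ℤ} (hsub : t.Sublist w) (ht : AllSameSign t) :
    ContainsB w (st (t.map (fun x => |x|))) ∨
      ContainsB w ((st (t.map (fun x => |x|))).map (fun x => -x)) := by
  rcases ht with ht | ht
  · exact Or.inl ⟨t, hsub, sts_of_pos ht⟩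
  · exact Or.inr ⟨t, hsub, sts_of_neg ht⟩

/-- An occurrence of `p` in `|w|` lifts to one of `p` or `-p` in `w`, as soon as any four entries
of `w` whose absolute values form the pattern `p` have a common sign. -/
theorem not_containsA_map_abs {w : List ℤ} {p q r s : ℤ}
    (hpos : ¬ ContainsB w [p, q, r, s]) (hneg : ¬ ContainsB w [-p, -q, -r, -s])
    (hsign : ∀ a b c d : ℤ, [a, b, c, d].Sublist w →
      (p < q → |a| < |b|) → (q < p → |b| < |a|) → (p < r → |a| < |c|) → (r < p → |c| < |a|) →
      (p < s → |a| < |d|) → (s < p → |d| < |a|) → (q < r → |b| < |c|) → (r < q → |c| < |b|) →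
      (q < s → |b| < |d|) → (s < q → |d| < |b|) → (r < s → |c| < |d|) → (s < r → |d| < |c|) →
      AllSameSign [a, b, c, d]) :
    ¬ ContainsA (w.map (fun x => |x|)) [p, q, r, s] := by
  rintro ⟨u, hu, hst⟩
  obtain ⟨t, ht, rfl⟩ := List.sublist_map_iff.1 hu
  have hlen : t.length = 4 := by simpa [st] using congrArg List.length hst
  match t, hlen with
  | [a, b, c, d], _ =>
    have hcont := contains_of_allSameSign ht (hsign a b c d ht ?_ ?_ ?_ ?_ ?_ ?_ ?_ ?_ ?_ ?_ ?_ ?_)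
    · rw [hst] at hcont
      exact hcont.elim hpos hneg
    all_goals
      simp only [st, List.map_cons, List.map_nil, List.cons.injEq, and_true] at hst
      obtain ⟨rfl, rfl, rfl, rfl⟩ := hst
      exact lt_of_rank_lt

theorem isSepB_of_isSepA {u : List ℤ} (h : IsSepA u) : IsSepB u := by
  obtain ⟨hperm, hpos, h₁, h₂⟩ := h
  refine ⟨hperm, fun hc => ?_, fun hc => ?_, fun hc => h₁ (containsA_of_containsB hpos hc).1,
    fun hc => h₂ (containsA_of_containsB hpos hc).1, fun hc => ?_, fun hc => ?_⟩ <;>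
  simpa using (containsA_of_containsB hpos hc).2

theorem isSepA_map_abs {w : List ℤ} (h : IsSepB w) : IsSepA (w.map (fun x => |x|)) := by
  obtain ⟨hperm, h₁, h₂, h₃, h₄, h₅, h₆⟩ := h
  have key : ∀ {a b c d x y : ℤ}, [a, b, c, d].Sublist w → [x, y].Sublist [a, b, c, d] →
      |y| < |x| → (0 < x ↔ 0 < y) := fun hs hxy hlt =>
    same_sign_of_inversion h₁ h₂ (hxy.trans hs) hlt
      (hperm.ne_zero (hs.subset (hxy.subset (by simp))))
  have finish : ∀ {a b c d : ℤ}, [a, b, c, d].Sublist w → (0 < a ↔ 0 < b) → (0 < a ↔ 0 < d) →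
      (0 < c ↔ 0 < d) ∨ (0 < b ↔ 0 < c) → AllSameSign [a, b, c, d] := by
    intro a b c d hs hab had hcd
    have ha : a ≠ 0 := hperm.ne_zero (hs.subset (by simp))
    have hb : b ≠ 0 := hperm.ne_zero (hs.subset (by simp))
    have hc : c ≠ 0 := hperm.ne_zero (hs.subset (by simp))
    have hd : d ≠ 0 := hperm.ne_zero (hs.subset (by simp))
    simp only [AllSameSign, List.forall_mem_cons]
    rcases lt_or_gt_of_ne ha with ha | ha
    · exact Or.inr ⟨by omega, by omega, by omega, by omega, by simp⟩
    · exact Or.inl ⟨by omega, by omega, by omega, by omega, by simp⟩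
  refine ⟨isSignedPerm_map_abs.2 hperm, ?_, not_containsA_map_abs h₃ h₅ ?_,
    not_containsA_map_abs h₄ h₆ ?_⟩
  · intro y hy
    obtain ⟨x, hx, rfl⟩ := List.mem_map.1 hy
    exact abs_pos.2 (hperm.ne_zero hx)
  · -- the inversions of `3142` form the path `1 - 3 - 2 - 4`
    intro a b c d hs _ hba _ _ _ hda _ _ _ _ _ hdc
    have hab := key (x := a) (y := b) hs (by simp) (hba (by norm_num))
    have had := key (x := a) (y := d) hs (by simp) (hda (by norm_num))
    have hcd := key (x := c) (y := d) hs (by simp) (hdc (by norm_num))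
    exact finish hs hab had (Or.inl hcd)
  · -- the inversions of `2413` form the path `2 - 1 - 4 - 3`
    intro a b c d hs _ _ _ hca _ _ _ hcb _ hdb _ _
    have hac := key (x := a) (y := c) hs (by simp) (hca (by norm_num))
    have hbc := key (x := b) (y := c) hs (by simp) (hcb (by norm_num))
    have hbd := key (x := b) (y := d) hs (by simp) (hdb (by norm_num))
    exact finish hs (hac.trans hbc.symm) ((hac.trans hbc.symm).trans hbd) (Or.inr hbc)

/-- For every `n ≥ 1`, `K(S_n) = { |w| : w ∈ K(B_n) }`. -/
theorem sep_perms_eq_abs_of_sep_signed_perms (n : ℕ) (hn : 1 ≤ n) :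
    {u : List ℤ | u.length = n ∧ IsSepA u} =
      (fun w : List ℤ => w.map (fun x => |x|)) ''
        {w : List ℤ | w.length = n ∧ IsSepB w} := by
  ext u
  constructor
  · rintro ⟨hlen, hu⟩
    exact ⟨u, ⟨hlen, isSepB_of_isSepA hu⟩, map_abs_of_pos hu.2.1⟩
  · rintro ⟨w, ⟨hlen, hw⟩, rfl⟩
    exact ⟨by simpa using hlen, isSepA_map_abs hw⟩

end

end SepPaperFormal
end

section
/- Let w ∈ K(B_n) and let p ∈ [n−1] be such that w_p and w_j have opposite signs for every j ∈ [p+1, n]. Then w_1⋯w_p is a separable signed permutation in B_p, sts(w_{p+1}⋯w_n) is a separable signed permutation in B_{n−p}, and w = w_1⋯w_p ⊕ sts(w_{p+1}⋯w_n). -/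
/-!
Write `w = a ++ b` with `a = w.take p`, `b = w.drop p`, and let `c` be the last letter of `a`.
Every letter of `a` is smaller in absolute value than every letter of `b`. Indeed, a letter followed
by one of opposite sign must be smaller in absolute value, since the two patterns of length two
are avoided (`abs_lt_of_mul_neg`). If `x ∈ a` has the sign of `c`, this applies to `x` and any
letter `y` of `b`; otherwise it gives `|x| < |c|` and `|c| < |y|`.

Since the absolute values of `a ++ b` form `{1, …, n}`, those of `a` are therefore `{1, …, p}`
and those of `b` are `{p + 1, …, n}` (`perm_range'_of_append`). So `sts b` just lowers every absolute
value in `b` by `p` (`sts_eq_map_of_perm`), an operation that `oplus a` undoes. Pattern avoidance passes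
to `a` because it is a subword of `w`, and to `sts b` because `sts` does not see a
transformation that preserves signs and the order of absolute values (`sts_map`).
-/

namespace SepPaperFormal

noncomputable section

open Polynomial

theorem ContainsB.mono {v w u : List ℤ} (h : v.Sublist w) (hu : ContainsB v u) :
    ContainsB w u :=
  let ⟨s, hs, e⟩ := hu
  ⟨s, hs.trans h, e⟩

theorem sts_map (f : ℤ → ℤ) (s : List ℤ) (hsign : ∀ x ∈ s, (f x).sign = x.sign)
    (hord : ∀ x ∈ s, ∀ y ∈ s, |f y| < |f x| ↔ |y| < |x|) : sts (s.map f) = sts s := by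
  unfold sts
  rw [List.map_map]
  refine List.map_congr_left fun x hx => ?_
  simp only [Function.comp, hsign x hx, List.filter_map, List.length_map]
  congr 4
  refine List.filter_congr fun y hy => ?_
  simp [hord x hx y hy]

theorem ContainsB.of_map (f : ℤ → ℤ) {b u : List ℤ} (hsign : ∀ x ∈ b, (f x).sign = x.sign)
    (hord : ∀ x ∈ b, ∀ y ∈ b, |f y| < |f x| ↔ |y| < |x|) (h : ContainsB (b.map f) u) :
    ContainsB b u := by
  obtain ⟨s, hs, rfl⟩ := h
  obtain ⟨t, ht, rfl⟩ := List.sublist_map_iff.1 hs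
  exact ⟨t, ht, (sts_map f t (fun x hx => hsign x (ht.subset hx))
    fun x hx y hy => hord x (ht.subset hx) y (ht.subset hy)).symm⟩

/-- A word of two letters of opposite signs, the first being larger in absolute value, is an
occurrence of one of the two forbidden patterns of length two. -/
theorem sts_pair {x y : ℤ} (hxy : x * y < 0) (h : |y| < |x|) :
    sts [x, y] = [-2, 1] ∨ sts [x, y] = [2, -1] := by
  rcases mul_neg_iff.1 hxy with ⟨hx, hy⟩ | ⟨hx, hy⟩
  · right
    simp [sts, h, h.le, Int.sign_eq_one_of_pos hx, Int.sign_eq_neg_one_of_neg hy]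
  · left
    simp [sts, h, h.le, Int.sign_eq_one_of_pos hy, Int.sign_eq_neg_one_of_neg hx]

theorem IsSignedPerm.nodup {w : List ℤ} (h : IsSignedPerm w) : (w.map Int.natAbs).Nodup :=
  h.nodup_iff.2 List.nodup_range'

theorem abs_lt_of_mul_neg {w : List ℤ} (hsep : IsSepB w) {x y : ℤ} (hs : [x, y].Sublist w)
    (hxy : x * y < 0) : x.natAbs < y.natAbs := by
  have hne : x.natAbs ≠ y.natAbs := by
    have := (hs.map Int.natAbs).nodup hsep.1.nodup
    simpa using this
  by_contra hlt
  have h : |y| < |x| := by rw [Int.abs_eq_natAbs, Int.abs_eq_natAbs]; omega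
  rcases sts_pair hxy h with e | e
  · exact hsep.2.1 ⟨_, hs, e⟩
  · exact hsep.2.2.1 ⟨_, hs, e⟩

theorem perm_range'_of_append {a b : List ℕ}
    (h : (a ++ b).Perm (List.range' 1 (a.length + b.length)))
    (hlt : ∀ x ∈ a, ∀ y ∈ b, x < y) :
    a.Perm (List.range' 1 a.length) ∧ b.Perm (List.range' (a.length + 1) b.length) := by
  have hnd : (a ++ b).Nodup := h.nodup_iff.2 List.nodup_range'
  have hmem : ∀ k, k ∈ a ∨ k ∈ b ↔ 1 ≤ k ∧ k < 1 + (a.length + b.length) := fun k => by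
    rw [← List.mem_append, h.mem_iff, List.mem_range'_1]
  -- `{1, …, x} ⊆ a` for every `x ∈ a`, so `x` is at most the number of letters of `a`.
  have hle : ∀ x ∈ a, x ≤ a.length := fun x hx => by
    have hsub : List.range' 1 x ⊆ a := fun k hk => by
      rw [List.mem_range'_1] at hk
      have hx' := (hmem x).1 (Or.inl hx)
      rcases (hmem k).2 (by omega) with hka | hkb
      · exact hka
      · have := hlt x hx k hkb
        omega
    simpa using ((List.nodup_range' (s := 1) (n := x)).subperm hsub).length_le
  have ha : a.Perm (List.range' 1 a.length) := by
    refine (List.Nodup.of_append_left hnd |>.subperm fun x hx => ?_).perm_of_length_le (by simp)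
    have h1 := (hmem x).1 (Or.inl hx)
    have h2 := hle x hx
    rw [List.mem_range'_1]
    omega
  refine ⟨ha, ?_⟩
  have h' : (a ++ b).Perm (a ++ List.range' (a.length + 1) b.length) := by
    refine h.trans (List.Perm.trans ?_ (ha.symm.append_right _))
    rw [add_comm a.length 1, List.range'_append_1]
  exact (List.perm_append_left_iff a).1 h'

theorem countP_lt_range' (s k : ℕ) : ∀ m, s ≤ k → k ≤ s + m →
    (List.range' s m).countP (fun z => decide (z < k)) = k - s
  | 0, h1, h2 => by simp; omega
  | m + 1, h1, h2 => by
    rw [List.range'_1_concat, List.countP_append]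
    rcases Nat.lt_or_ge (s + m) k with hk | hk
    · rw [List.countP_eq_length.2 fun z hz => by
        rw [List.mem_range'_1] at hz
        simp; omega]
      simp [hk]; omega
    · rw [countP_lt_range' s k m h1 hk]
      simp [hk]

/-- If the absolute values of `b` are `p + 1, …, p + m`, then standardizing `b` lowers each of them
by `p`. -/
theorem sts_eq_map_of_perm {b : List ℤ} {p : ℕ}
    (h : (b.map Int.natAbs).Perm (List.range' (p + 1) b.length)) :
    sts b = b.map (fun y => y - y.sign * (p : ℤ)) := by
  refine List.map_congr_left fun x hx => ?_
  have hx' := h.mem_iff.1 (List.mem_map_of_mem (f := Int.natAbs) hx)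
  rw [List.mem_range'_1] at hx'
  have hcount : (b.filter (fun y => decide (|y| < |x|))).length = x.natAbs - (p + 1) := by
    rw [← countP_lt_range' (p + 1) x.natAbs b.length hx'.1 (by omega), ← h.countP_eq,
      List.countP_map, List.countP_eq_length_filter]
    congr 1
    refine List.filter_congr fun y _ => ?_
    simp only [Function.comp, Int.abs_eq_natAbs, Nat.cast_lt]
  have hx1 : ((x.natAbs - (p + 1) : ℕ) : ℤ) + 1 = |x| - p := by
    rw [Int.abs_eq_natAbs]; omega
  rw [hcount, hx1, mul_sub, Int.sign_mul_abs]

theorem lower_spec {x : ℤ} {p : ℕ} (h : p < x.natAbs) :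
    (x - x.sign * (p : ℤ)).sign = x.sign ∧ (x - x.sign * (p : ℤ)).natAbs = x.natAbs - p := by
  rcases lt_trichotomy x 0 with hx | hx | hx
  · rw [Int.sign_eq_neg_one_of_neg hx]
    exact ⟨Int.sign_eq_neg_one_of_neg (by omega), by omega⟩
  · omega
  · rw [Int.sign_eq_one_of_pos hx]
    exact ⟨Int.sign_eq_one_of_pos (by omega), by omega⟩

theorem isSepB_append {a b : List ℤ} (hsep : IsSepB (a ++ b))
    (hlt : ∀ x ∈ a, ∀ y ∈ b, x.natAbs < y.natAbs) :
    IsSepB a ∧ IsSepB (sts b) ∧ a ++ b = oplus a (sts b) := by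
  obtain ⟨hperm, hav⟩ := hsep
  obtain ⟨ha, hb⟩ := perm_range'_of_append (a := a.map Int.natAbs) (b := b.map Int.natAbs)
    (by simpa [IsSignedPerm] using hperm) (by simpa using hlt)
  simp only [List.length_map] at ha hb
  have hbig : ∀ x ∈ b, a.length < x.natAbs := fun x hx => by
    have := hb.mem_iff.1 (List.mem_map_of_mem (f := Int.natAbs) hx)
    rw [List.mem_range'_1] at this
    omega
  have hsts := sts_eq_map_of_perm hb
  have hA : ∀ u, ¬ ContainsB (a ++ b) u → ¬ ContainsB a u := fun u hu h =>
    hu (h.mono (List.sublist_append_left a b))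
  have hB : ∀ u, ¬ ContainsB (a ++ b) u → ¬ ContainsB (sts b) u := fun u hu h => by
    rw [hsts] at h
    refine hu ((ContainsB.of_map _ (fun x hx => (lower_spec (hbig x hx)).1)
      (fun x hx y hy => ?_) h).mono (List.sublist_append_right a b))
    have hx' := (lower_spec (hbig x hx)).2
    have hy' := (lower_spec (hbig y hy)).2
    have := hbig x hx
    have := hbig y hy
    rw [Int.abs_eq_natAbs, Int.abs_eq_natAbs, Int.abs_eq_natAbs, Int.abs_eq_natAbs, hx', hy']
    omega
  obtain ⟨h1, h2, h3, h4, h5, h6⟩ := hav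
  refine ⟨⟨ha, hA _ h1, hA _ h2, hA _ h3, hA _ h4, hA _ h5, hA _ h6⟩,
    ⟨?_, hB _ h1, hB _ h2, hB _ h3, hB _ h4, hB _ h5, hB _ h6⟩, ?_⟩
  · have h := hb.map (fun k => k - a.length)
    rw [List.map_sub_range' (by omega), List.map_map, Nat.add_sub_cancel_left] at h
    rw [IsSignedPerm, hsts, List.map_map, List.length_map]
    convert h using 1
    exact List.map_congr_left fun x hx => (lower_spec (hbig x hx)).2
  · rw [oplus, hsts, List.map_map]
    congr 1
    conv_lhs => rw [← List.map_id b]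
    refine List.map_congr_left fun x hx => ?_
    simp [(lower_spec (hbig x hx)).1]

/-- If `w ∈ K(B_n)` and `p ∈ [n-1]` is such that `w_p` and `w_j`
have opposite signs for every `j ∈ [p+1, n]`, then `w₁⋯w_p` and `sts(w_{p+1}⋯w_n)`
are separable and `w = w₁⋯w_p ⊕ sts(w_{p+1}⋯w_n)`. -/
theorem sep_signed_direct_sum_decomp (n p : ℕ) (w : List ℤ)
    (hw : w.length = n) (hsep : IsSepB w)
    (hp1 : 1 ≤ p) (hp2 : p < n)
    (hopp : ∀ j, p ≤ j → j < n → w[p-1]! * w[j]! < 0) :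
    IsSepB (w.take p) ∧ IsSepB (sts (w.drop p)) ∧
      w = oplus (w.take p) (sts (w.drop p)) := by
  subst hw
  rw [← List.take_append_drop p w] at hsep
  suffices h : ∀ x ∈ w.take p, ∀ y ∈ w.drop p, x.natAbs < y.natAbs by
    simpa only [List.take_append_drop] using isSepB_append hsep h
  obtain ⟨c, hc⟩ : ∃ c, c = w[p - 1]! := ⟨_, rfl⟩
  have htake : w.take p = w.take (p - 1) ++ [c] := by
    obtain ⟨q, rfl⟩ : ∃ q, p = q + 1 := ⟨p - 1, by omega⟩
    have hq : q < w.length := by omega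
    rw [hc, List.take_succ_eq_append_getElem hq]
    simp [hq]
  have hcy : ∀ y ∈ w.drop p, c * y < 0 := fun y hy => by
    obtain ⟨i, hi, rfl⟩ := List.mem_iff_getElem.1 hy
    rw [List.length_drop] at hi
    have hi' : p + i < w.length := by omega
    have := hopp (p + i) (by omega) hi'
    rw [getElem!_pos w (p + i) hi', ← hc] at this
    simpa using this
  -- A letter of `take p` precedes each letter of `drop p`.
  have hpair : ∀ x ∈ w.take p, ∀ y ∈ w.drop p, x * y < 0 → x.natAbs < y.natAbs :=
    fun x hx y hy => abs_lt_of_mul_neg hsep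
      ((List.singleton_sublist.2 hx).append (List.singleton_sublist.2 hy))
  intro x hx y hy
  have hcmem : c ∈ w.take p := by simp [htake]
  rcases lt_or_ge (x * y) 0 with hxy | hxy
  · exact hpair x hx y hy hxy
  · have hx0 : x ≠ 0 := by
      rintro rfl
      have := hsep.1.mem_iff.1
        (List.mem_map_of_mem (f := Int.natAbs) (List.mem_append_left (w.drop p) hx))
      rw [List.mem_range'_1] at this
      exact absurd this.1 (by simp)
    have hxc : x * c < 0 := by
      have hcy' := hcy y hy
      rcases mul_neg_iff.1 hcy' with ⟨h1, h2⟩ | ⟨h1, h2⟩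
      · exact mul_neg_of_neg_of_pos (lt_of_le_of_ne (nonpos_of_mul_nonneg_left hxy h2) hx0) h1
      · exact mul_neg_of_pos_of_neg
          (lt_of_le_of_ne (nonneg_of_mul_nonneg_left hxy h2) hx0.symm) h1
    have hx' : x ∈ w.take (p - 1) := by
      rw [htake, List.mem_append, List.mem_singleton] at hx
      rcases hx with hx | rfl
      · exact hx
      · nlinarith [mul_self_nonneg x]
    refine (abs_lt_of_mul_neg hsep ?_ hxc).trans (hpair c hcmem y hy (hcy y hy))
    refine List.Sublist.trans ?_ (List.sublist_append_left _ _)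
    rw [htake]
    exact (List.singleton_sublist.2 hx').append (List.Sublist.refl [c])

end

end SepPaperFormal
end

section
/- Let n ≥ 2 and w ∈ B_n. Then w is a separable signed permutation if and only if there exist p ∈ [n−1] and separable signed permutations u ∈ B_p and v ∈ B_{n−p} such that either w = u ⊕ v, or all entries of u and all entries of v have the same sign and w = u ⊖ v. -/
/-!
In a signed permutation, avoiding `(-2) 1` and `2 (-1)` means that any two letters forming an
inversion in absolute value have the same sign. Given this, an occurrence of `3142` or `2413` in
absolute values has all its letters of one sign, because its inversions connect the four letters.
So `w` is separable iff it is `Good`: inversions in absolute value are sign-homogeneous and the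
word of absolute values avoids `3142` and `2413` (`isSepB_iff`). Being good passes to subwords and
depends only on signs and on the relative order of the absolute values.

If `w` is good with at least two letters, then `w = A ++ B` with `A` and `B` nonempty and one of
them entirely below the other in absolute value. This is the classical decomposition of separable
permutations, proved in `splits_of_avoids` by strong induction, with `splits_snoc` for the step.
The lower part is then a signed permutation, and so is the upper part once its letters are moved
towards zero (`IsSignedPerm.divide`); this exhibits `w` as `u ⊕ v` or `u ⊖ v`. In the skew case
each letter of `A` forms an inversion with each letter of `B`, so all signs agree.

Conversely `3142` and `2413` are neither sums nor skew sums of shorter patterns, so concatenating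
two good words, one below the other, creates no new occurrence; the new inversions of a skew
sum have equal signs by hypothesis (`Good.append`).
-/

namespace SepPaperFormal

noncomputable section

open Polynomial

/-! ### Decomposing a word that avoids 2413 and 3142 -/

/-- The word `l`, compared through the key `f`, contains neither `3142` nor `2413`. -/
def Avoids (f : ℤ → ℤ) (l : List ℤ) : Prop :=
  ∀ a b c d, [a, b, c, d].Sublist l →
    ¬ (f b < f d ∧ f d < f a ∧ f a < f c) ∧ ¬ (f c < f a ∧ f a < f d ∧ f d < f b)

/-- The word `l` is a concatenation of two nonempty words, one of which lies entirely below
the other with respect to the key `f`. -/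
def Splits (f : ℤ → ℤ) (l : List ℤ) : Prop :=
  ∃ A B, A ≠ [] ∧ B ≠ [] ∧ l = A ++ B ∧
    ((∀ a ∈ A, ∀ b ∈ B, f a < f b) ∨ (∀ a ∈ A, ∀ b ∈ B, f b < f a))

/-- Reversing the order of values exchanges `3142` and `2413`. -/
theorem Avoids.neg {f : ℤ → ℤ} {l : List ℤ} (h : Avoids f l) : Avoids (fun x => - f x) l := by
  intro a b c d hs
  have := h a b c d hs
  simp only [neg_lt_neg_iff]
  tauto

theorem Splits.of_neg {f : ℤ → ℤ} {l : List ℤ} (h : Splits (fun x => - f x) l) :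
    Splits f l := by
  obtain ⟨A, B, hA, hB, rfl, h⟩ := h
  simp only [neg_lt_neg_iff] at h
  exact ⟨A, B, hA, hB, rfl, h.symm⟩

/-- Inductive step: `x` is appended to a word `A ++ B` with `A` below `B`, and the shorter word
`A ++ [x]` is already known to split. If it splits as an increasing sum, `B` can be absorbed into
the upper part; if it splits as a skew sum, then `x` lies below all of `A ++ B`, since otherwise
`x` ends an occurrence of `3142`. -/
theorem splits_snoc {f : ℤ → ℤ} {A B : List ℤ} {x : ℤ} (hA : A ≠ []) (hB : B ≠ [])
    (hAB : ∀ a ∈ A, ∀ b ∈ B, f a < f b)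
    (hx : ∀ a ∈ A, f a ≠ f x)
    (hav : Avoids f (A ++ B ++ [x])) (ih : Splits f (A ++ [x])) :
    Splits f (A ++ B ++ [x]) := by
  by_cases h1 : ∀ a ∈ A, f a < f x
  · refine ⟨A, B ++ [x], hA, by simp, by simp, Or.inl ?_⟩
    intro a ha b hb
    rcases List.mem_append.1 hb with hb | hb
    · exact hAB a ha b hb
    · rw [List.mem_singleton.1 hb]
      exact h1 a ha
  push Not at h1
  obtain ⟨a₀, ha₀, hxa₀⟩ := h1
  have hxB : ∀ b ∈ B, f x < f b := fun b hb => lt_of_le_of_lt hxa₀ (hAB a₀ ha₀ b hb)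
  obtain ⟨C, D, hC, hD, hCD, hlt⟩ := ih
  obtain ⟨D', y, rfl⟩ : ∃ D' y, D = D' ++ [y] :=
    ⟨_, _, (List.dropLast_append_getLast hD).symm⟩
  rw [← List.append_assoc] at hCD
  obtain ⟨rfl, hxy⟩ := List.append_inj' hCD rfl
  obtain rfl : x = y := by simpa using hxy
  rcases hlt with hlt | hlt
  · refine ⟨C, D' ++ B ++ [x], hC, by simp, by simp, Or.inl ?_⟩
    intro c hc z hz
    simp only [List.mem_append, List.mem_singleton] at hz
    rcases hz with (hz | hz) | rfl
    · exact hlt c hc z (by simp [hz])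
    · exact hAB c (by simp [hc]) z hz
    · exact hlt c hc z (by simp)
  · refine ⟨C ++ D' ++ B, [x], by simp [hC], by simp, rfl, Or.inr ?_⟩
    intro z hz y hy
    obtain rfl := List.mem_singleton.1 hy
    simp only [List.mem_append] at hz
    rcases hz with (hz | hz) | hz
    · exact hlt z hz _ (by simp)
    · by_contra hcon
      have hne := hx z (by simp [hz])
      -- `c z b y` with `c ∈ C`, `b ∈ B` and `f z < f y` is an occurrence of `3142`
      obtain ⟨c, hc⟩ := List.exists_mem_of_ne_nil C hC
      obtain ⟨b, hb⟩ := List.exists_mem_of_ne_nil B hB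
      have hsub : [c, z, b, y].Sublist (C ++ D' ++ B ++ [y]) := by
        have := (((List.singleton_sublist.2 hc).append (List.singleton_sublist.2 hz)).append
          (List.singleton_sublist.2 hb)).append (List.Sublist.refl [y])
        simpa using this
      refine (hav c z b y hsub).1 ⟨by omega, hlt c hc y (by simp), hAB c (by simp [hc]) b hb⟩
    · exact hxB z hz

/-- Words with distinct keys avoiding `3142` and `2413` split, by strong induction on length. -/
theorem splits_of_avoids (m : ℕ) : ∀ (f : ℤ → ℤ) (l : List ℤ), l.length = m → 2 ≤ m →
    l.Pairwise (fun a b => f a ≠ f b) → Avoids f l → Splits f l := by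
  induction m using Nat.strong_induction_on with
  | _ m ih =>
  intro f l hl hm hp hav
  have hne : l ≠ [] := by rintro rfl; simp at hl; omega
  obtain ⟨l', x, rfl⟩ : ∃ l' x, l = l' ++ [x] :=
    ⟨_, _, (List.dropLast_append_getLast hne).symm⟩
  simp only [List.length_append, List.length_singleton] at hl
  have hp' := List.pairwise_append.1 hp
  have hx : ∀ a ∈ l', f a ≠ f x := fun a ha => hp'.2.2 a ha x (by simp)
  have mono : ∀ {s : List ℤ}, s.Sublist (l' ++ [x]) → Avoids f s :=
    fun hs a b c d h => hav a b c d (h.trans hs)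
  by_cases h2 : m = 2
  · obtain ⟨y, rfl⟩ := List.length_eq_one_iff.1 (show l'.length = 1 by omega)
    refine ⟨[y], [x], by simp, by simp, rfl, ?_⟩
    simpa using lt_or_gt_of_ne (hx y (by simp))
  · obtain ⟨A, B, hA, hB, rfl, hAB⟩ := ih l'.length (by omega) f l' rfl (by omega) hp'.1
      (mono (List.sublist_append_left _ _))
    have hApos := List.length_pos_of_ne_nil hA
    have hBpos := List.length_pos_of_ne_nil hB
    have hsub : (A ++ [x]).Sublist (A ++ B ++ [x]) :=
      (List.sublist_append_left _ _).append (List.Sublist.refl _)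
    have hlen : (A ++ [x]).length < m := by
      simp only [List.length_append, List.length_singleton] at hl ⊢
      omega
    have hxA : ∀ a ∈ A, f a ≠ f x := fun a ha => hx a (by simp [ha])
    have hAx := ih _ hlen f (A ++ [x]) rfl (by simp; omega) (hp.sublist hsub) (mono hsub)
    rcases hAB with hAB | hAB
    · exact splits_snoc hA hB hAB hxA hav hAx
    · apply Splits.of_neg
      refine splits_snoc hA hB (fun a ha b hb => neg_lt_neg (hAB a ha b hb))
        (fun a ha h => hxA a ha (neg_injective h)) hav.neg ?_
      apply Splits.of_neg
      simpa using hAx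

/-! ### Separability in terms of absolute values -/

/-- Pattern-free description of separability: letters forming an inversion in absolute value
have the same sign, and the word of absolute values avoids `3142` and `2413`. -/
def Good (w : List ℤ) : Prop :=
  (∀ a b, [a, b].Sublist w → |b| < |a| → 0 < a * b) ∧ Avoids abs w

theorem Good.sublist {s w : List ℤ} (h : Good w) (hs : s.Sublist w) : Good s :=
  ⟨fun a b hab => h.1 a b (hab.trans hs), fun a b c d hh => h.2 a b c d (hh.trans hs)⟩

theorem abs_eq_of_sign_mul {x m : ℤ} {k : ℕ} (h : x.sign * ((k : ℤ) + 1) = m) (hm : m ≠ 0) :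
    |m| = k + 1 := by
  have hk : (0 : ℤ) < (k : ℤ) + 1 := by positivity
  rcases lt_trichotomy x 0 with hx | rfl | hx
  · rw [Int.sign_eq_neg_one_of_neg hx] at h
    rw [← h, neg_one_mul, abs_neg, abs_of_pos hk]
  · simp at h
    exact absurd h.symm hm
  · rw [Int.sign_eq_one_of_pos hx] at h
    rw [← h, one_mul, abs_of_pos hk]

theorem pos_mul_of_sign_mul {x m : ℤ} {k : ℕ} (h : x.sign * ((k : ℤ) + 1) = m) (hm : m ≠ 0) :
    0 < x * m := by
  have hk : (0 : ℤ) < (k : ℤ) + 1 := by positivity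
  have hx : x ≠ 0 := by
    rintro rfl
    simp at h
    exact hm h.symm
  rw [← h, ← mul_assoc, Int.mul_sign_self]
  positivity

/-- Standardization reflects strict comparisons of absolute values. -/
theorem abs_lt_of_sts {s : List ℤ} {x y m m' : ℤ}
    (hx : x.sign * (((s.filter (fun z => decide (|z| < |x|))).length : ℤ) + 1) = m)
    (hy : y.sign * (((s.filter (fun z => decide (|z| < |y|))).length : ℤ) + 1) = m')
    (hm : m ≠ 0) (hm' : m' ≠ 0) (hlt : |m| < |m'|) : |x| < |y| := by
  by_contra hcon
  push Not at hcon
  rw [abs_eq_of_sign_mul hx hm, abs_eq_of_sign_mul hy hm'] at hlt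
  have hsub : (s.filter (fun z => decide (|z| < |y|))).Sublist
      (s.filter (fun z => decide (|z| < |x|))) := by
    apply List.monotone_filter_right
    intro z hz
    simp only [decide_eq_true_eq] at hz ⊢
    exact lt_of_lt_of_le hz hcon
  have := hsub.length_le
  omega

/-- A good word contains no inversion in absolute value with opposite signs. -/
theorem Good.not_containsB_two {w : List ℤ} (h : Good w) {p q : ℤ} (hpq : p * q < 0)
    (hlt : |q| < |p|) : ¬ ContainsB w [p, q] := by
  rintro ⟨s, hs, he⟩
  obtain ⟨a, b, rfl⟩ := List.length_eq_two.1 (show s.length = 2 by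
    simpa [sts] using congrArg List.length he)
  have hp : p ≠ 0 := by rintro rfl; simp at hpq
  have hq : q ≠ 0 := by rintro rfl; simp at hpq
  simp only [sts, List.map_cons, List.map_nil, List.cons.injEq, and_true] at he
  have h1 := h.1 a b hs (abs_lt_of_sts he.2 he.1 hq hp hlt)
  have h2 := pos_mul_of_sign_mul he.1 hp
  have h3 := pos_mul_of_sign_mul he.2 hq
  have h4 : 0 < (a * b) * (p * q) := by
    have := mul_pos h2 h3
    nlinarith
  nlinarith

theorem Good.not_containsB_four {w : List ℤ} (h : Good w) {p q r t : ℤ}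
    (hp : p ≠ 0) (hq : q ≠ 0) (hr : r ≠ 0) (ht : t ≠ 0)
    (hlt : (|q| < |t| ∧ |t| < |p| ∧ |p| < |r|) ∨ (|r| < |p| ∧ |p| < |t| ∧ |t| < |q|)) :
    ¬ ContainsB w [p, q, r, t] := by
  rintro ⟨s, hs, he⟩
  obtain ⟨a, b, c, d, rfl⟩ : ∃ a b c d, s = [a, b, c, d] := by
    have hl : s.length = 4 := by simpa [sts] using congrArg List.length he
    match s, hl with
    | [a, b, c, d], _ => exact ⟨a, b, c, d, rfl⟩
  simp only [sts, List.map_cons, List.map_nil, List.cons.injEq, and_true] at he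
  obtain ⟨ha, hb, hc, hd⟩ := he
  have := h.2 a b c d hs
  rcases hlt with ⟨h1, h2, h3⟩ | ⟨h1, h2, h3⟩
  · exact this.1 ⟨abs_lt_of_sts hb hd hq ht h1, abs_lt_of_sts hd ha ht hp h2,
      abs_lt_of_sts ha hc hp hr h3⟩
  · exact this.2 ⟨abs_lt_of_sts hc ha hr hp h1, abs_lt_of_sts ha hd hp ht h2,
      abs_lt_of_sts hd hb ht hq h3⟩

/-- In an occurrence of `3142` or `2413` in absolute values, the inversions connect all four
letters, so all signs agree and one of the four forbidden patterns of length 4 occurs. -/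
theorem good_of_isSepB {w : List ℤ} (h : IsSepB w) : Good w := by
  obtain ⟨hw, h1, h2, h3, h4, h5, h6⟩ := h
  have hinv : ∀ a b, [a, b].Sublist w → |b| < |a| → 0 < a * b := by
    intro a b hs hlt
    have ha : a ≠ 0 := hw.ne_zero (hs.subset (by simp))
    have hb : b ≠ 0 := hw.ne_zero (hs.subset (by simp))
    rcases ha.lt_or_gt with ha | ha <;> rcases hb.lt_or_gt with hb | hb
    · exact mul_pos_of_neg_of_neg ha hb
    · refine absurd ⟨_, hs, ?_⟩ h1
      simp [sts, Int.sign_eq_neg_one_of_neg ha, Int.sign_eq_one_of_pos hb, hlt, hlt.le]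
    · refine absurd ⟨_, hs, ?_⟩ h2
      simp [sts, Int.sign_eq_neg_one_of_neg hb, Int.sign_eq_one_of_pos ha, hlt, hlt.le]
    · exact mul_pos ha hb
  refine ⟨hinv, ?_⟩
  intro a b c d hs
  have ha : a ≠ 0 := hw.ne_zero (hs.subset (by simp))
  have hab : [a, b].Sublist w := List.Sublist.trans (by simp) hs
  have had : [a, d].Sublist w := List.Sublist.trans (by simp) hs
  have hac : [a, c].Sublist w := List.Sublist.trans (by simp) hs
  have hbc : [b, c].Sublist w := List.Sublist.trans (by simp) hs
  have hbd : [b, d].Sublist w := List.Sublist.trans (by simp) hs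
  have hcd : [c, d].Sublist w := List.Sublist.trans (by simp) hs
  constructor
  · rintro ⟨k1, k2, k3⟩
    have k12 := k1.trans k2
    have k23 := k2.trans k3
    have k13 := k12.trans k3
    have e1 := hinv a b hab (by omega)
    have e2 := hinv a d had (by omega)
    have e3 := hinv c d hcd (by omega)
    rcases ha.lt_or_gt with ha | ha
    · have hb : b < 0 := by nlinarith
      have hd : d < 0 := by nlinarith
      have hc : c < 0 := by nlinarith
      refine h5 ⟨_, hs, ?_⟩
      simp [sts, Int.sign_eq_neg_one_of_neg ha, Int.sign_eq_neg_one_of_neg hb, Int.sign_eq_neg_one_of_neg hc, Int.sign_eq_neg_one_of_neg hd,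
        k1, k2, k3, k12, k23, k13, k1.le, k2.le, k3.le, k12.le, k23.le, k13.le]
    · have hb : 0 < b := by nlinarith
      have hd : 0 < d := by nlinarith
      have hc : 0 < c := by nlinarith
      refine h3 ⟨_, hs, ?_⟩
      simp [sts, Int.sign_eq_one_of_pos ha, Int.sign_eq_one_of_pos hb, Int.sign_eq_one_of_pos hc, Int.sign_eq_one_of_pos hd,
        k1, k2, k3, k12, k23, k13, k1.le, k2.le, k3.le, k12.le, k23.le, k13.le]
  · rintro ⟨k1, k2, k3⟩
    have k12 := k1.trans k2
    have k23 := k2.trans k3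
    have k13 := k12.trans k3
    have e1 := hinv a c hac (by omega)
    have e2 := hinv b c hbc (by omega)
    have e3 := hinv b d hbd (by omega)
    rcases ha.lt_or_gt with ha | ha
    · have hc : c < 0 := by nlinarith
      have hb : b < 0 := by nlinarith
      have hd : d < 0 := by nlinarith
      refine h6 ⟨_, hs, ?_⟩
      simp [sts, Int.sign_eq_neg_one_of_neg ha, Int.sign_eq_neg_one_of_neg hb, Int.sign_eq_neg_one_of_neg hc, Int.sign_eq_neg_one_of_neg hd,
        k1, k2, k3, k12, k23, k13, k1.le, k2.le, k3.le, k12.le, k23.le, k13.le]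
    · have hc : 0 < c := by nlinarith
      have hb : 0 < b := by nlinarith
      have hd : 0 < d := by nlinarith
      refine h4 ⟨_, hs, ?_⟩
      simp [sts, Int.sign_eq_one_of_pos ha, Int.sign_eq_one_of_pos hb, Int.sign_eq_one_of_pos hc, Int.sign_eq_one_of_pos hd,
        k1, k2, k3, k12, k23, k13, k1.le, k2.le, k3.le, k12.le, k23.le, k13.le]

theorem isSepB_iff {w : List ℤ} : IsSepB w ↔ IsSignedPerm w ∧ Good w :=
  ⟨fun h => ⟨h.1, good_of_isSepB h⟩, fun ⟨hw, h⟩ =>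
    ⟨hw, h.not_containsB_two (by norm_num) (by norm_num),
      h.not_containsB_two (by norm_num) (by norm_num),
      h.not_containsB_four (by norm_num) (by norm_num) (by norm_num) (by norm_num) (by norm_num),
      h.not_containsB_four (by norm_num) (by norm_num) (by norm_num) (by norm_num) (by norm_num),
      h.not_containsB_four (by norm_num) (by norm_num) (by norm_num) (by norm_num) (by norm_num),
      h.not_containsB_four (by norm_num) (by norm_num) (by norm_num) (by norm_num)
        (by norm_num)⟩⟩

/-! ### Shifting absolute values -/

/-- Moves `x` away from zero by `p`; this is the shift used in `oplus` and `ominus`. -/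
def shift (p : ℕ) (x : ℤ) : ℤ := x + x.sign * (p : ℤ)

/-- Moves `x` towards zero by `p`; inverse to `shift p` on letters with `p < |x|`. -/
def unshift (p : ℕ) (x : ℤ) : ℤ := x - x.sign * (p : ℤ)

theorem abs_shift {p : ℕ} {x : ℤ} (hx : x ≠ 0) : |shift p x| = |x| + p := by
  unfold shift
  rcases hx.lt_or_gt with h | h
  · rw [Int.sign_eq_neg_one_of_neg h, abs_of_neg h, abs_of_neg (by omega)]; ring
  · rw [Int.sign_eq_one_of_pos h, abs_of_pos h, abs_of_pos (by omega)]; ring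

theorem sign_shift {p : ℕ} {x : ℤ} : (shift p x).sign = x.sign := by
  unfold shift
  rcases lt_trichotomy x 0 with h | rfl | h
  · rw [Int.sign_eq_neg_one_of_neg h, Int.sign_eq_neg_one_of_neg (by omega)]
  · simp
  · rw [Int.sign_eq_one_of_pos h, Int.sign_eq_one_of_pos (by omega)]

theorem abs_shift_lt_iff {p : ℕ} {x y : ℤ} : |shift p x| < |shift p y| ↔ |x| < |y| := by
  have h0 : shift p 0 = 0 := by simp [shift]
  rcases eq_or_ne x 0 with rfl | hx <;> rcases eq_or_ne y 0 with rfl | hy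
  · simp [h0]
  · have := abs_pos.2 hy
    rw [h0, abs_shift hy]; simp; omega
  · have := abs_nonneg x
    rw [h0, abs_shift hx]; simp; omega
  · rw [abs_shift hx, abs_shift hy]; omega

theorem shift_mul_pos_iff {p : ℕ} {x y : ℤ} : 0 < shift p x * shift p y ↔ 0 < x * y := by
  rw [← Int.sign_eq_one_iff_pos, ← Int.sign_eq_one_iff_pos, Int.sign_mul, Int.sign_mul,
    sign_shift, sign_shift]

theorem abs_unshift {p : ℕ} {x : ℤ} (hx : (p : ℤ) < |x|) : |unshift p x| = |x| - p := by
  unfold unshift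
  rcases lt_trichotomy x 0 with h | rfl | h
  · rw [abs_of_neg h] at *
    rw [Int.sign_eq_neg_one_of_neg h, abs_of_neg (by omega)]; ring
  · simp at hx; omega
  · rw [abs_of_pos h] at *
    rw [Int.sign_eq_one_of_pos h, abs_of_pos (by omega)]; ring

theorem sign_unshift {p : ℕ} {x : ℤ} (hx : (p : ℤ) < |x|) : (unshift p x).sign = x.sign := by
  unfold unshift
  rcases lt_trichotomy x 0 with h | rfl | h
  · rw [abs_of_neg h] at hx
    rw [Int.sign_eq_neg_one_of_neg h, Int.sign_eq_neg_one_of_neg (by omega)]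
  · simp
  · rw [abs_of_pos h] at hx
    rw [Int.sign_eq_one_of_pos h, Int.sign_eq_one_of_pos (by omega)]

theorem shift_unshift {p : ℕ} {x : ℤ} (hx : (p : ℤ) < |x|) : shift p (unshift p x) = x := by
  unfold shift
  rw [sign_unshift hx, unshift]
  ring

theorem map_shift_unshift {p : ℕ} {L : List ℤ} (h : ∀ x ∈ L, (p : ℤ) < |x|) :
    (L.map (unshift p)).map (shift p) = L := by
  rw [List.map_map]
  conv_rhs => rw [← List.map_id L]
  exact List.map_congr_left fun x hx => shift_unshift (h x hx)

/-- `Good` depends only on signs and on the relative order of absolute values. -/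
theorem good_map_shift_iff {p : ℕ} {w : List ℤ} : Good (w.map (shift p)) ↔ Good w := by
  constructor
  · intro h
    refine ⟨fun a b hs hlt => ?_, fun a b c d hs => ?_⟩
    · exact shift_mul_pos_iff.1 (h.1 _ _ (hs.map (shift p)) (abs_shift_lt_iff.2 hlt))
    · have := h.2 _ _ _ _ (hs.map (shift p))
      simpa only [abs_shift_lt_iff] using this
  · intro h
    refine ⟨fun a b hs hlt => ?_, fun a b c d hs => ?_⟩
    · obtain ⟨s, hs', he⟩ := List.sublist_map_iff.1 hs
      obtain ⟨a', b', rfl⟩ := List.length_eq_two.1 (show s.length = 2 by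
        simpa using (congrArg List.length he).symm)
      simp only [List.map_cons, List.map_nil, List.cons.injEq, and_true] at he
      obtain ⟨rfl, rfl⟩ := he
      exact shift_mul_pos_iff.2 (h.1 _ _ hs' (abs_shift_lt_iff.1 hlt))
    · obtain ⟨s, hs', he⟩ := List.sublist_map_iff.1 hs
      obtain ⟨a', b', c', d', rfl⟩ : ∃ a b c d, s = [a, b, c, d] := by
        have hl : s.length = 4 := by simpa using (congrArg List.length he).symm
        match s, hl with
        | [a, b, c, d], _ => exact ⟨a, b, c, d, rfl⟩
      simp only [List.map_cons, List.map_nil, List.cons.injEq, and_true] at he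
      obtain ⟨rfl, rfl, rfl, rfl⟩ := he
      simpa only [abs_shift_lt_iff] using h.2 _ _ _ _ hs'

/-! ### The two summands as signed permutations -/

theorem isSignedPerm_iff {w : List ℤ} : IsSignedPerm w ↔
    (w.map Int.natAbs).Nodup ∧ ∀ x ∈ w, 1 ≤ |x| ∧ |x| ≤ w.length := by
  constructor
  · intro h
    refine ⟨h.nodup_iff.2 List.nodup_range', fun x hx => ?_⟩
    have := h.mem_iff.1 (List.mem_map_of_mem hx)
    rw [List.mem_range'_1] at this
    rw [Int.abs_eq_natAbs]
    omega
  · rintro ⟨hnd, h⟩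
    have hsub : w.map Int.natAbs ⊆ List.range' 1 w.length := by
      intro k hk
      obtain ⟨x, hx, rfl⟩ := List.mem_map.1 hk
      have := h x hx
      rw [Int.abs_eq_natAbs] at this
      rw [List.mem_range'_1]
      omega
    exact (List.subperm_of_subset hnd hsub).perm_of_length_le (by simp)

/-- If the letters of a signed permutation are divided into small ones `S` and large ones `L`,
then `S` uses exactly the absolute values `1, …, |S|`. -/
theorem IsSignedPerm.divide {w S L : List ℤ} (hw : IsSignedPerm w) (hp : w.Perm (S ++ L))
    (hSL : ∀ x ∈ S, ∀ y ∈ L, |x| < |y|) :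
    IsSignedPerm S ∧ (∀ y ∈ L, (S.length : ℤ) < |y|) ∧
      IsSignedPerm (L.map (unshift S.length)) := by
  have hmem : ∀ k : ℕ, 1 ≤ k → k ≤ w.length → k ∈ (S ++ L).map Int.natAbs := by
    intro k h1 h2
    rw [← (hp.map Int.natAbs).mem_iff, hw.mem_iff, List.mem_range'_1]
    omega
  have hlen := hp.length_eq
  rw [List.length_append] at hlen
  obtain ⟨hnd, hbd⟩ := isSignedPerm_iff.1 hw
  have hbd' : ∀ x ∈ S ++ L, 1 ≤ |x| ∧ |x| ≤ w.length := fun x hx => hbd x (hp.mem_iff.2 hx)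
  rw [(hp.map Int.natAbs).nodup_iff, List.map_append, List.nodup_append] at hnd
  obtain ⟨hndS, hndL, -⟩ := hnd
  have hL : ∀ y ∈ L, (S.length : ℤ) < |y| := by
    intro y hy
    have hsub : S.map Int.natAbs ⊆ List.range' 1 (y.natAbs - 1) := by
      intro k hk
      obtain ⟨x, hx, rfl⟩ := List.mem_map.1 hk
      have h1 := hbd' x (by simp [hx])
      have h2 := hSL x hx y hy
      simp only [Int.abs_eq_natAbs] at h1 h2
      rw [List.mem_range'_1]
      omega
    have h1 := (List.subperm_of_subset hndS hsub).length_le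
    have h2 := hbd' y (by simp [hy])
    simp only [List.length_map, List.length_range', Int.abs_eq_natAbs] at h1 h2 ⊢
    omega
  have hS : ∀ x ∈ S, |x| ≤ S.length := by
    intro x hx
    have h2 := hbd' x (by simp [hx])
    rw [Int.abs_eq_natAbs] at h2
    have hsub : List.range' 1 x.natAbs ⊆ S.map Int.natAbs := by
      intro k hk
      rw [List.mem_range'_1] at hk
      obtain ⟨z, hz, rfl⟩ := List.mem_map.1 (hmem k (by omega) (by omega))
      rcases List.mem_append.1 hz with hz | hz
      · exact List.mem_map_of_mem hz
      · have := hSL x hx z hz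
        simp only [Int.abs_eq_natAbs] at this
        omega
    have h1 := (List.subperm_of_subset List.nodup_range' hsub).length_le
    simp only [List.length_map, List.length_range', Int.abs_eq_natAbs] at h1 ⊢
    omega
  refine ⟨isSignedPerm_iff.2 ⟨hndS, fun x hx => ⟨(hbd' x (by simp [hx])).1, hS x hx⟩⟩, hL,
    isSignedPerm_iff.2 ⟨?_, ?_⟩⟩
  · rw [List.map_map, List.nodup_map_iff_inj_on hndL.of_map]
    intro x hx y hy hxy
    refine List.inj_on_of_nodup_map hndL hx hy ?_
    have hx' := abs_unshift (hL x hx)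
    have hy' := abs_unshift (hL y hy)
    simp only [Function.comp_apply, Int.abs_eq_natAbs] at hxy hx' hy'
    omega
  · intro z hz
    obtain ⟨y, hy, rfl⟩ := List.mem_map.1 hz
    have h1 := hL y hy
    have h2 := hbd' y (by simp [hy])
    rw [abs_unshift h1, List.length_map]
    omega

/-! ### Concatenations -/

/-- Concatenating two good words one of which lies below the other creates no new obstruction,
since `3142` and `2413` do not split; a skew concatenation only creates inversions between the
two parts, whence the sign condition. -/
theorem Good.append {A B : List ℤ} (hA : Good A) (hB : Good B)
    (h : (∀ a ∈ A, ∀ b ∈ B, |a| < |b|) ∨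
      (∀ a ∈ A, ∀ b ∈ B, |b| < |a|) ∧ ∀ a ∈ A, ∀ b ∈ B, 0 < a * b) :
    Good (A ++ B) := by
  refine ⟨fun a b hs hlt => ?_, fun a b c d hs => ?_⟩
  · obtain ⟨s, t, he, hs, ht⟩ := List.sublist_append_iff.1 hs
    match s, t, he with
    | [], [_, _], rfl => exact hB.1 a b ht hlt
    | [_], [_], rfl =>
      have ha : a ∈ A := hs.subset (by simp)
      have hb : b ∈ B := ht.subset (by simp)
      rcases h with h | h
      · have := h a ha b hb
        omega
      · exact h.2 a ha b hb
    | [_, _], [], rfl => exact hA.1 a b hs hlt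
  · obtain ⟨s, t, he, hs, ht⟩ := List.sublist_append_iff.1 hs
    have h' : (∀ a ∈ A, ∀ b ∈ B, |a| < |b|) ∨ (∀ a ∈ A, ∀ b ∈ B, |b| < |a|) :=
      h.imp_right And.left
    match s, t, he with
    | [], [_, _, _, _], rfl => exact hB.2 a b c d ht
    | [_], [_, _, _], rfl =>
      have ha : a ∈ A := hs.subset (by simp)
      have hb : b ∈ B := ht.subset (by simp)
      have hc : c ∈ B := ht.subset (by simp)
      have hd : d ∈ B := ht.subset (by simp)
      rcases h' with h | h <;> have k1 := h a ha b hb <;> have k2 := h a ha c hc <;>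
        have k3 := h a ha d hd <;> constructor <;> rintro ⟨_, _, _⟩ <;> omega
    | [_, _], [_, _], rfl =>
      have ha : a ∈ A := hs.subset (by simp)
      have hb : b ∈ A := hs.subset (by simp)
      have hc : c ∈ B := ht.subset (by simp)
      have hd : d ∈ B := ht.subset (by simp)
      rcases h' with h | h <;> have k1 := h a ha c hc <;> have k2 := h a ha d hd <;>
        have k3 := h b hb c hc <;> have k4 := h b hb d hd <;> constructor <;>
        rintro ⟨_, _, _⟩ <;> omega
    | [_, _, _], [_], rfl =>
      have ha : a ∈ A := hs.subset (by simp)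
      have hb : b ∈ A := hs.subset (by simp)
      have hc : c ∈ A := hs.subset (by simp)
      have hd : d ∈ B := ht.subset (by simp)
      rcases h' with h | h <;> have k1 := h a ha d hd <;> have k2 := h b hb d hd <;>
        have k3 := h c hc d hd <;> constructor <;> rintro ⟨_, _, _⟩ <;> omega
    | [_, _, _, _], [], rfl => exact hA.2 a b c d hs

theorem oplus_eq (u v : List ℤ) : oplus u v = u ++ v.map (shift u.length) := rfl

theorem ominus_eq (u v : List ℤ) : ominus u v = u.map (shift v.length) ++ v := rfl

theorem IsSepB.good_oplus {u v : List ℤ} (hu : IsSepB u) (hv : IsSepB v) :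
    Good (oplus u v) := by
  rw [oplus_eq]
  refine (good_of_isSepB hu).append (good_map_shift_iff.2 (good_of_isSepB hv)) (Or.inl ?_)
  intro a ha b hb
  obtain ⟨y, hy, rfl⟩ := List.mem_map.1 hb
  have h1 := (isSignedPerm_iff.1 hu.1).2 a ha
  have h2 := (isSignedPerm_iff.1 hv.1).2 y hy
  rw [abs_shift (hv.1.ne_zero hy)]
  omega

theorem IsSepB.good_ominus {u v : List ℤ} (hu : IsSepB u) (hv : IsSepB v)
    (hs : AllSameSign (u ++ v)) : Good (ominus u v) := by
  rw [ominus_eq]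
  refine (good_map_shift_iff.2 (good_of_isSepB hu)).append (good_of_isSepB hv)
    (Or.inr ⟨?_, ?_⟩)
  · intro a ha b hb
    obtain ⟨y, hy, rfl⟩ := List.mem_map.1 ha
    have h1 := (isSignedPerm_iff.1 hu.1).2 y hy
    have h2 := (isSignedPerm_iff.1 hv.1).2 b hb
    rw [abs_shift (hu.1.ne_zero hy)]
    omega
  · intro a ha b hb
    obtain ⟨y, hy, rfl⟩ := List.mem_map.1 ha
    rw [← Int.sign_eq_one_iff_pos, Int.sign_mul, sign_shift, ← Int.sign_mul,
      Int.sign_eq_one_iff_pos]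
    rcases hs with hs | hs
    · exact mul_pos (hs y (by simp [hy])) (hs b (by simp [hb]))
    · exact mul_pos_of_neg_of_neg (hs y (by simp [hy])) (hs b (by simp [hb]))

/-- In a good word of the form `A ++ B` with `B` below `A`, every pair of letters taken from the
two parts is an inversion, so all letters share one sign. -/
theorem Good.allSameSign_of_skew {A B : List ℤ} (h : Good (A ++ B)) (hA : A ≠ []) (hB : B ≠ [])
    (hlt : ∀ a ∈ A, ∀ b ∈ B, |b| < |a|) : AllSameSign (A ++ B) := by
  have key : ∀ a ∈ A, ∀ b ∈ B, 0 < a * b := fun a ha b hb =>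
    h.1 a b ((List.singleton_sublist.2 ha).append (List.singleton_sublist.2 hb)) (hlt a ha b hb)
  obtain ⟨a₀, ha₀⟩ := List.exists_mem_of_ne_nil A hA
  obtain ⟨b₀, hb₀⟩ := List.exists_mem_of_ne_nil B hB
  have h00 := key a₀ ha₀ b₀ hb₀
  rcases lt_trichotomy a₀ 0 with h0 | rfl | h0
  · have hb0 : b₀ < 0 := by nlinarith
    refine Or.inr fun x hx => ?_
    rcases List.mem_append.1 hx with hx | hx
    · exact neg_of_mul_pos_left (key x hx b₀ hb₀) hb0.le
    · exact neg_of_mul_pos_right (key a₀ ha₀ x hx) h0.le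
  · simp at h00
  · have hb0 : 0 < b₀ := by nlinarith
    refine Or.inl fun x hx => ?_
    rcases List.mem_append.1 hx with hx | hx
    · exact pos_of_mul_pos_left (key x hx b₀ hb₀) hb0.le
    · exact pos_of_mul_pos_right (key a₀ ha₀ x hx) h0.le

/-- For `n ≥ 2` and `w ∈ B_n`, `w` is separable iff there exist
`p ∈ [n-1]` and separable signed permutations `u ∈ B_p`, `v ∈ B_{n-p}` with either
`w = u ⊕ v`, or all entries of `u` and of `v` of the same sign and `w = u ⊖ v`. -/
theorem sep_signed_iff_sum_of_seps (n : ℕ) (hn : 2 ≤ n) (w : List ℤ)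
    (hw : w.length = n) (hperm : IsSignedPerm w) :
    IsSepB w ↔ ∃ p, 1 ≤ p ∧ p < n ∧ ∃ u v : List ℤ,
      u.length = p ∧ v.length = n - p ∧ IsSepB u ∧ IsSepB v ∧
      (w = oplus u v ∨ (AllSameSign (u ++ v) ∧ w = ominus u v)) := by
  constructor
  · intro hsep
    have hgood := good_of_isSepB hsep
    have hpw : w.Pairwise (fun a b => |a| ≠ |b|) := by
      have := (isSignedPerm_iff.1 hperm).1
      rw [List.Nodup, List.pairwise_map] at this
      exact this.imp fun h h' => h (by simpa only [Int.abs_eq_natAbs, Nat.cast_inj] using h')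
    obtain ⟨A, B, hA, hB, rfl, hAB⟩ := splits_of_avoids n abs w hw hn hpw hgood.2
    have hApos := List.length_pos_of_ne_nil hA
    have hBpos := List.length_pos_of_ne_nil hB
    rw [List.length_append] at hw
    have hgA := hgood.sublist (List.sublist_append_left A B)
    have hgB := hgood.sublist (List.sublist_append_right A B)
    rcases hAB with hAB | hAB
    · obtain ⟨hpA, hlt, hpB⟩ := hperm.divide (List.Perm.refl _) hAB
      have hmap := map_shift_unshift hlt
      refine ⟨A.length, hApos, by omega, A, B.map (unshift A.length), rfl, by simp; omega,
        isSepB_iff.2 ⟨hpA, hgA⟩, isSepB_iff.2 ⟨hpB, ?_⟩, Or.inl ?_⟩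
      · rwa [← good_map_shift_iff (p := A.length), hmap]
      · rw [oplus_eq, hmap]
    · obtain ⟨hpB, hlt, hpA⟩ := hperm.divide List.perm_append_comm
        (fun b hb a ha => hAB a ha b hb)
      have hmap := map_shift_unshift hlt
      refine ⟨A.length, hApos, by omega, A.map (unshift B.length), B, by simp, by omega,
        isSepB_iff.2 ⟨hpA, ?_⟩, isSepB_iff.2 ⟨hpB, hgB⟩, Or.inr ⟨?_, ?_⟩⟩
      · rwa [← good_map_shift_iff (p := B.length), hmap]
      · have hsign : ∀ x ∈ A.map (unshift B.length), ∃ y ∈ A, x.sign = y.sign := by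
          intro x hx
          obtain ⟨y, hy, rfl⟩ := List.mem_map.1 hx
          exact ⟨y, hy, sign_unshift (hlt y hy)⟩
        rcases hgood.allSameSign_of_skew hA hB hAB with hs | hs
        · refine Or.inl fun x hx => ?_
          rcases List.mem_append.1 hx with hx | hx
          · obtain ⟨y, hy, he⟩ := hsign x hx
            rw [← Int.sign_eq_one_iff_pos, he, Int.sign_eq_one_iff_pos]
            exact hs y (by simp [hy])
          · exact hs x (by simp [hx])
        · refine Or.inr fun x hx => ?_
          rcases List.mem_append.1 hx with hx | hx
          · obtain ⟨y, hy, he⟩ := hsign x hx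
            rw [← Int.sign_eq_neg_one_iff_neg, he, Int.sign_eq_neg_one_iff_neg]
            exact hs y (by simp [hy])
          · exact hs x (by simp [hx])
      · rw [ominus_eq, hmap]
  · rintro ⟨p, -, -, u, v, -, -, hu, hv, rfl | ⟨hs, rfl⟩⟩
    · exact isSepB_iff.2 ⟨hperm, hu.good_oplus hv⟩
    · exact isSepB_iff.2 ⟨hperm, hu.good_ominus hv hs⟩

end

end SepPaperFormal
end

section
/- If w ∈ K(B_n) is a separable signed permutation, then its standardization st(w) is a separable permutation in S_n. -/
/-!
The key observation is that avoiding `(-2)1` and `2(-1)` forces two entries of opposite sign to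
appear in increasing order of absolute value (`abs_lt_of_neg_pos`, `abs_lt_of_pos_neg`).

Standardization preserves relative order, so an occurrence of `3142` in `st w` comes from entries
`a, b, c, d` of `w`, in this order, with `b < d < a < c`. If all four are positive they form the
signed pattern `3142`, and if all are negative they form `(-2)(-4)(-1)(-3)`. Otherwise `b < 0 < c`,
and the comparisons of absolute values for pairs of opposite sign contradict `b < d < a < c`.
The pattern `2413` is handled in the same way. That `st w` is a permutation follows because
its entries are distinct and lie in `{1, …, n}`.
-/
namespace SepPaperFormal

noncomputable section

open Polynomial

/-- The value assigned to `x` by the standardization of `a`: its rank among the entries of `a`. -/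
def rank (a : List ℤ) (x : ℤ) : ℤ := ((a.filter (fun y => decide (y < x))).length : ℤ) + 1

theorem st_eq_map_rank (a : List ℤ) : st a = a.map (rank a) := rfl

theorem rank_mono (a : List ℤ) {x y : ℤ} (h : x ≤ y) : rank a x ≤ rank a y := by
  unfold rank
  have : (a.filter (fun z => decide (z < x))).length
      ≤ (a.filter (fun z => decide (z < y))).length := by
    apply List.Sublist.length_le
    apply List.monotone_filter_right
    intro z hz
    simp only [decide_eq_true_eq] at hz ⊢
    omega
  omega

theorem lt_of_rank_lt_s5 (a : List ℤ) {x y : ℤ} (h : rank a x < rank a y) : x < y := by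
  by_contra! hc
  exact absurd (rank_mono a hc) (by omega)

theorem rank_pos (a : List ℤ) (x : ℤ) : 0 < rank a x := by
  unfold rank
  omega

theorem rank_le_length (a : List ℤ) {x : ℤ} (hx : x ∈ a) : rank a x ≤ a.length := by
  unfold rank
  have : (a.filter (fun z => decide (z < x))).length < a.length :=
    List.length_filter_lt_length_iff_exists.2 ⟨x, hx, by simp⟩
  omega

/-- The entries below `y` include `x` itself and all entries below `x`. In particular the rank is
injective on the entries of `a`. -/
theorem rank_lt (a : List ℤ) {x y : ℤ} (hx : x ∈ a) (h : x < y) : rank a x < rank a y := by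
  unfold rank
  have h1 : (a.filter (fun z => decide (z < x))) =
      (a.filter (fun z => decide (z < y))).filter (fun z => decide (z < x)) := by
    rw [List.filter_filter]
    apply List.filter_congr
    intro z _
    grind
  have h2 : (a.filter (fun z => decide (z < x))).length
      < (a.filter (fun z => decide (z < y))).length := by
    rw [h1]
    exact List.length_filter_lt_length_iff_exists.2 ⟨x, by simp [hx, h], by simp⟩
  omega

theorem isSignedPerm_st {w : List ℤ} (hw : w.Nodup) : IsSignedPerm (st w) := by
  unfold IsSignedPerm
  rw [st_eq_map_rank, List.map_map, List.length_map]
  have hnd : (w.map (Int.natAbs ∘ rank w)).Nodup := by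
    refine hw.map_on ?_
    intro x hx y hy hxy
    have := rank_pos w x
    have := rank_pos w y
    simp only [Function.comp] at hxy
    rcases lt_trichotomy x y with h | h | h
    · have := rank_lt w hx h
      omega
    · exact h
    · have := rank_lt w hy h
      omega
  refine (List.subperm_of_subset hnd ?_).perm_of_length_le (by simp)
  intro k hk
  obtain ⟨x, hx, rfl⟩ := List.mem_map.1 hk
  have := rank_pos w x
  have := rank_le_length w hx
  simp only [Function.comp, List.mem_range'_1]
  omega

/-- An occurrence of a pattern of length four in `st w`, pulled back to entries of `w`. The
function `f` sends each entry to its pattern value (the rank, within the occurrence, of its rank in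
`w`), and a smaller value comes from a smaller entry. -/
theorem exists_of_containsA_st {w : List ℤ} {p q r t : ℤ} (h : ContainsA (st w) [p, q, r, t]) :
    ∃ a b c d : ℤ, [a, b, c, d].Sublist w ∧ ∃ f : ℤ → ℤ,
      (∀ x y, f x < f y → x < y) ∧ f a = p ∧ f b = q ∧ f c = r ∧ f d = t := by
  obtain ⟨s, hs, hst⟩ := h
  rw [st_eq_map_rank, List.sublist_map_iff] at hs
  obtain ⟨s', hs', rfl⟩ := hs
  rw [st_eq_map_rank, List.map_map] at hst
  have hlen := congrArg List.length hst
  simp only [List.length_map, List.length_cons, List.length_nil] at hlen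
  match s', hlen with
  | [a, b, c, d], _ =>
    refine ⟨a, b, c, d, hs', rank (List.map (rank w) [a, b, c, d]) ∘ rank w, ?_, ?_⟩
    · intro x y hxy
      exact lt_of_rank_lt_s5 w (lt_of_rank_lt_s5 _ hxy)
    · simpa using hst

theorem abs_lt_of_neg_pos {w : List ℤ} (hno : ¬ ContainsB w [-2, 1])
    (hnd : (w.map Int.natAbs).Nodup) {x y : ℤ} (h : [x, y].Sublist w) (hx : x < 0) (hy : 0 < y) :
    -x < y := by
  have hne := (hnd.sublist (h.map Int.natAbs))
  simp only [List.map_cons, List.map_nil, List.nodup_cons, List.mem_cons, List.not_mem_nil,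
    or_false] at hne
  by_contra hc
  have hlt : y < -x := by omega
  refine hno ⟨_, h, ?_⟩
  simp [sts, List.filter_cons, abs_of_neg hx, abs_of_pos hy, hlt, hlt.le,
    Int.sign_eq_neg_one_of_neg hx, Int.sign_eq_one_of_pos hy]

theorem abs_lt_of_pos_neg {w : List ℤ} (hno : ¬ ContainsB w [2, -1])
    (hnd : (w.map Int.natAbs).Nodup) {x y : ℤ} (h : [x, y].Sublist w) (hx : 0 < x) (hy : y < 0) :
    x < -y := by
  have hne := (hnd.sublist (h.map Int.natAbs))
  simp only [List.map_cons, List.map_nil, List.nodup_cons, List.mem_cons, List.not_mem_nil,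
    or_false] at hne
  by_contra hc
  have hlt : -y < x := by omega
  refine hno ⟨_, h, ?_⟩
  simp [sts, List.filter_cons, abs_of_pos hx, abs_of_neg hy, hlt, hlt.le,
    Int.sign_eq_one_of_pos hx, Int.sign_eq_neg_one_of_neg hy]

theorem sts_3142 {a b c d : ℤ} (hb : 0 < b) (h1 : b < d) (h2 : d < a) (h3 : a < c) :
    sts [a, b, c, d] = [3, 1, 4, 2] := by
  simp only [sts, List.map_cons, List.map_nil, List.filter_cons, List.filter_nil,
    abs_of_pos (show 0 < a by omega), abs_of_pos hb, abs_of_pos (show 0 < c by omega),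
    abs_of_pos (show 0 < d by omega), Int.sign_eq_one_of_pos (show 0 < a by omega),
    Int.sign_eq_one_of_pos hb, Int.sign_eq_one_of_pos (show 0 < c by omega),
    Int.sign_eq_one_of_pos (show 0 < d by omega), decide_eq_true_eq]
  grind

theorem sts_2413 {a b c d : ℤ} (hc : 0 < c) (h1 : c < a) (h2 : a < d) (h3 : d < b) :
    sts [a, b, c, d] = [2, 4, 1, 3] := by
  simp only [sts, List.map_cons, List.map_nil, List.filter_cons, List.filter_nil,
    abs_of_pos (show 0 < a by omega), abs_of_pos hc, abs_of_pos (show 0 < b by omega),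
    abs_of_pos (show 0 < d by omega), Int.sign_eq_one_of_pos (show 0 < a by omega),
    Int.sign_eq_one_of_pos hc, Int.sign_eq_one_of_pos (show 0 < b by omega),
    Int.sign_eq_one_of_pos (show 0 < d by omega), decide_eq_true_eq]
  grind

theorem sts_map_neg (a : List ℤ) : sts (a.map (fun x => -x)) = (sts a).map (fun x => -x) := by
  simp [sts, List.filter_map, Function.comp_def]

/-- If `w ∈ K(B_n)` then `st(w) ∈ K(S_n)`. -/
theorem standardization_of_sep_signed_is_sep (n : ℕ) (w : List ℤ)
    (hw : w.length = n) (hsep : IsSepB w) :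
    IsSepA (st w) := by
  obtain ⟨hperm, hnp, hpn, h3142, h2413, hm3142, hm2413⟩ := hsep
  have hnd : (w.map Int.natAbs).Nodup := hperm.nodup_iff.2 List.nodup_range'
  have hne : ∀ x ∈ w, x ≠ 0 := by
    rintro x hx rfl
    have := hperm.subset (List.mem_map_of_mem (f := Int.natAbs) hx)
    simp [List.mem_range'_1] at this
  refine ⟨isSignedPerm_st hnd.of_map, ?_, ?_, ?_⟩
  · intro x hx
    obtain ⟨y, -, rfl⟩ := List.mem_map.1 hx
    exact rank_pos w y
  all_goals
    intro hcon
    obtain ⟨a, b, c, d, hsub, f, hf, ha, hb, hc, hd⟩ := exists_of_containsA_st hcon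
    have ha0 := hne a (hsub.subset (by simp))
    have hb0 := hne b (hsub.subset (by simp))
    have hc0 := hne c (hsub.subset (by simp))
    have hd0 := hne d (hsub.subset (by simp))
    have pair : ∀ x y, [x, y].Sublist [a, b, c, d] →
        (x < 0 → 0 < y → -x < y) ∧ (0 < x → y < 0 → x < -y) := fun x y h =>
      ⟨abs_lt_of_neg_pos hnp hnd (h.trans hsub), abs_lt_of_pos_neg hpn hnd (h.trans hsub)⟩
    have hab := pair a b (by grind)
    have hbc := pair b c (by grind)
    have hbd := pair b d (by grind)
    have hcd := pair c d (by grind)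
  · have h1 := hf b d (by omega)
    have h2 := hf d a (by omega)
    have h3 := hf a c (by omega)
    have hcase : 0 < b ∨ c < 0 := by omega
    rcases hcase with h | h
    · exact h3142 ⟨_, hsub, sts_3142 h h1 h2 h3⟩
    · -- Negation reverses the order, so `-a, -b, -c, -d` form the pattern `2413`.
      refine hm2413 ⟨_, hsub, ?_⟩
      have := sts_map_neg [-a, -b, -c, -d]
      rw [sts_2413 (by omega) (by omega) (by omega) (by omega)] at this
      simpa using this
  · have h1 := hf c a (by omega)
    have h2 := hf a d (by omega)
    have h3 := hf d b (by omega)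
    have hcase : 0 < c ∨ b < 0 := by omega
    rcases hcase with h | h
    · exact h2413 ⟨_, hsub, sts_2413 h h1 h2 h3⟩
    · -- Negation reverses the order, so `-a, -b, -c, -d` form the pattern `3142`.
      refine hm3142 ⟨_, hsub, ?_⟩
      have := sts_map_neg [-a, -b, -c, -d]
      rw [sts_3142 (by omega) (by omega) (by omega) (by omega)] at this
      simpa using this

end

end SepPaperFormal
end
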